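/- Let C be a quasiminimal pregeometry class, H ∈ C uncountable, and X ⊆ H countable. Then for y ∈ H: y ∈ cl(X) if and only if y satisfies some L_{ω₁,ω}-formula φ(v) with parameters from X such that the set of solutions of φ in H is countable. -/

import Mathlib

open FirstOrder FirstOrder.Language Set Cardinal



universe u u' v w

namespace QM

variable {L : FirstOrder.Language.{v, w}}

/-- Formulas of `L_{ω₁,ω}`: built from atomic formulas by negation, countable
conjunction (indexed by `ℕ`), and universal quantification; `α` is the type of free
variables and `n` counts the de Bruijn bound variables. Countable disjunctions and
the existential quantifier are definable via negation. -/
inductive InfFormula (L : FirstOrder.Language.{v, w}) (α : Type u) : ℕ → Type (max u v w)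
  | falsum {n : ℕ} : InfFormula L α n
  | equal {n : ℕ} (t₁ t₂ : L.Term (α ⊕ (Fin n))) : InfFormula L α n
  | rel {n l : ℕ} (R : L.Relations l) (ts : Fin l → L.Term (α ⊕ (Fin n))) : InfFormula L α n
  | not {n : ℕ} (φ : InfFormula L α n) : InfFormula L α n
  | iInf {n : ℕ} (φ : ℕ → InfFormula L α n) : InfFormula L α n
  | all {n : ℕ} (φ : InfFormula L α (n + 1)) : InfFormula L α n

/-- Satisfaction of an `L_{ω₁,ω}`-formula in an `L`-structure `M`, given an
assignment `v` of the free variables and `xs` of the bound variables. -/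
def InfFormula.Realize {M : Type u'} [L.Structure M] {α : Type u} :
    ∀ {n : ℕ}, InfFormula L α n → (α → M) → (Fin n → M) → Prop
  | _, .falsum, _, _ => False
  | _, .equal t₁ t₂, v, xs => t₁.realize (Sum.elim v xs) = t₂.realize (Sum.elim v xs)
  | _, .rel R ts, v, xs => Structure.RelMap R (fun i => (ts i).realize (Sum.elim v xs))
  | _, .not φ, v, xs => ¬ φ.Realize v xs
  | _, .iInf φ, v, xs => ∀ i : ℕ, (φ i).Realize v xs
  | _, .all φ, v, xs => ∀ x : M, φ.Realize v (Fin.snoc xs x)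

/-- An `L_{ω₁,ω}`-sentence. -/
abbrev InfSentence (L : FirstOrder.Language.{v, w}) := InfFormula L PEmpty 0

/-- Satisfaction of an `L_{ω₁,ω}`-sentence. -/
def InfSentence.RealizeS (M : Type u') [L.Structure M] (φ : InfSentence L) : Prop :=
  InfFormula.Realize (M := M) φ PEmpty.elim (fun i => i.elim0)

/-- Satisfaction of an `L_{ω₁,ω}`-formula with parameters from the set `A`
and `m` free variables `v̄`, at the tuple `v`. -/
def InfFormula.RealizeP {M : Type u'} [L.Structure M] {A : Set M} {m : ℕ}
    (φ : InfFormula L (↥A ⊕ Fin m) 0) (v : Fin m → M) : Prop :=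
  φ.Realize (Sum.elim Subtype.val v) (fun i => i.elim0)

/-- The domain of a partial map, viewed as a graph (set of pairs). -/
def pdom {H : Type*} {H' : Type*} (p : Set (H × H')) : Set H := Prod.fst '' p

/-- The image of a partial map, viewed as a graph (set of pairs). -/
def pimg {H : Type*} {H' : Type*} (p : Set (H × H')) : Set H' := Prod.snd '' p

/-- The image of a set `X` under a partial map given as a graph. -/
def pimage {H : Type*} {H' : Type*} (p : Set (H × H')) (X : Set H) : Set H' :=
  {b | ∃ a ∈ X, (a, b) ∈ p}

/-- A partial map (given as its graph `p`) is a partial embedding if it preserves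
quantifier-free first-order formulas. (This forces `p` to be the graph of an
injective partial function.) -/
def IsPartialEmbedding {H : Type u} {H' : Type u} [L.Structure H] [L.Structure H']
    (p : Set (H × H')) : Prop :=
  ∀ (n : ℕ) (φ : L.Formula (Fin n)), BoundedFormula.IsQF φ →
    ∀ (a : Fin n → H) (b : Fin n → H'), (∀ i, (a i, b i) ∈ p) →
      (φ.Realize a ↔ φ.Realize b)

/-- A partial map is a σ-embedding if it is a partial embedding and preserves all
`L_{ω₁,ω}`-formulas with (possibly infinitely many) parameters from its domain;
equivalently `⟨M, m⟩_{m ∈ dom p} ≡_{ω₁,ω} ⟨N, p(m)⟩_{m ∈ dom p}`. -/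
def IsSigmaEmbedding {H : Type u} {H' : Type u} [L.Structure H] [L.Structure H']
    (p : Set (H × H')) : Prop :=
  IsPartialEmbedding (L := L) p ∧
    ∀ (φ : InfFormula L (↥(pdom p)) 0) (b : ↥(pdom p) → H'),
      (∀ x : ↥(pdom p), ((x : H), b x) ∈ p) →
        (φ.Realize Subtype.val (fun i => i.elim0) ↔ φ.Realize b (fun i => i.elim0))

/-- A pregeometry (combinatorial geometry) on a set. -/
structure IsPregeometry {α : Type*} (cl : Set α → Set α) : Prop where
  subset_cl : ∀ X, X ⊆ cl X
  mono : ∀ ⦃X Y : Set α⦄, X ⊆ Y → cl X ⊆ cl Y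
  idem : ∀ X, cl (cl X) = cl X
  finChar : ∀ (X : Set α) (y : α), y ∈ cl X → ∃ F : Finset α, ↑F ⊆ X ∧ y ∈ cl ↑F
  exchange : ∀ (X : Set α) (a b : α), a ∈ cl (X ∪ {b}) → a ∉ cl X → b ∈ cl (X ∪ {a})

/-- A pair `⟨H, cl_H⟩` of an `L`-structure and a closure operator on it. -/
structure QMObj (L : FirstOrder.Language.{v, w}) where
  carrier : Type u
  [str : L.Structure carrier]
  cl : Set carrier → Set carrier

attribute [instance] QMObj.str

/-- `G` is countable and closed, or empty. -/
def CCOE (H : QMObj.{u} L) (G : Set H.carrier) : Prop :=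
  (G.Countable ∧ H.cl G = G) ∨ G = ∅

/-- The axioms for a class of pairs `⟨H, cl_H⟩` to be a quasiminimal pregeometry class. -/
structure IsQMClass (C : Set (QMObj.{u} L)) : Prop where
  /-- Closure under isomorphisms, transporting the closure operator. -/
  iso_closed : ∀ H ∈ C, ∀ (N : Type u) [_iN : L.Structure N] (f : H.carrier ≃[L] N),
      (⟨N, fun X => f '' (H.cl (f ⁻¹' X))⟩ : QMObj L) ∈ C
  /-- Any two members satisfy the same quantifier-free sentences. -/
  qf_theory : ∀ H ∈ C, ∀ H' ∈ C, ∀ (φ : L.Sentence), BoundedFormula.IsQF φ →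
      (H.carrier ⊨ φ ↔ H'.carrier ⊨ φ)
  /-- Each `cl_H` is a pregeometry. -/
  pregeom : ∀ H ∈ C, IsPregeometry H.cl
  /-- The closure of a finite set is countable. -/
  cl_finite_countable : ∀ H ∈ C, ∀ X : Set H.carrier, X.Finite → (H.cl X).Countable
  /-- The closure of any set is (the underlying set of) a substructure which, with the
  restricted closure operator, is again a member of the class. -/
  cl_mem : ∀ H ∈ C, ∀ X : Set H.carrier, ∃ S : L.Substructure H.carrier,
      (S : Set H.carrier) = H.cl X ∧
      (⟨↥S, fun Y => Subtype.val ⁻¹' (H.cl (Subtype.val '' Y))⟩ : QMObj L) ∈ C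
  /-- Partial embeddings preserve and reflect the closure relation. -/
  cl_embedding : ∀ H ∈ C, ∀ H' ∈ C, ∀ (p : Set (H.carrier × H'.carrier)),
      IsPartialEmbedding (L := L) p → ∀ X ⊆ pdom p, ∀ (y : H.carrier) (y' : H'.carrier),
        (y, y') ∈ p → (y ∈ H.cl X ↔ y' ∈ H'.cl (pimage p X))
  /-- ℵ₀-homogeneity over countable closed models, part (i): an isomorphism between
  countable closed (or empty) sets extends by any pair of independent points. -/
  homogeneity₁ : ∀ H ∈ C, ∀ H' ∈ C, ∀ (g : Set (H.carrier × H'.carrier)),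
      CCOE H (pdom g) → CCOE H' (pimg g) → IsPartialEmbedding (L := L) g →
      ∀ (x : H.carrier) (x' : H'.carrier), x ∉ H.cl (pdom g) → x' ∉ H'.cl (pimg g) →
        IsPartialEmbedding (L := L) (g ∪ {(x, x')})
  /-- ℵ₀-homogeneity over countable closed models, part (ii). -/
  homogeneity₂ : ∀ H ∈ C, ∀ H' ∈ C, ∀ (g f : Set (H.carrier × H'.carrier)),
      CCOE H (pdom g) → CCOE H' (pimg g) → IsPartialEmbedding (L := L) g →
      (pdom f).Finite → IsPartialEmbedding (L := L) (g ∪ f) →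
      ∀ y ∈ H.cl (pdom f ∪ pdom g), ∃ y' : H'.carrier,
        IsPartialEmbedding (L := L) (g ∪ f ∪ {(y, y')})


/-- `p` is a σ-type over `A` in `m` variables: every countable subset of `p` is
consistent with the structure, i.e. simultaneously satisfiable. -/
def IsSigmaType {M : Type u'} [L.Structure M] {A : Set M} {m : ℕ}
    (p : Set (InfFormula L (↥A ⊕ Fin m) 0)) : Prop :=
  ∀ Φ ⊆ p, Φ.Countable → ∃ v : Fin m → M, ∀ φ ∈ Φ, φ.RealizeP v

/-- A σ-type `p` is isolated if there is a consistent `L_{ω₁,ω}`-formula `ψ(x̄)`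
(possibly with parameters from `M`) such that `ψ` implies every formula of `p`. -/
def IsIsolated {M : Type u'} [L.Structure M] {A : Set M} {m : ℕ}
    (p : Set (InfFormula L (↥A ⊕ Fin m) 0)) : Prop :=
  ∃ ψ : InfFormula L (M ⊕ Fin m) 0,
    (∃ v : Fin m → M, ψ.Realize (Sum.elim id v) (fun i => i.elim0)) ∧
    ∀ φ ∈ p, ∀ v : Fin m → M, ψ.Realize (Sum.elim id v) (fun i => i.elim0) → φ.RealizeP v

/-- A σ-type `p` is realised if some tuple satisfies every formula of `p`. -/
def IsRealized {M : Type u'} [L.Structure M] {A : Set M} {m : ℕ}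
    (p : Set (InfFormula L (↥A ⊕ Fin m) 0)) : Prop :=
  ∃ v : Fin m → M, ∀ φ ∈ p, φ.RealizeP v

/-- `B` is an independent subset of the pregeometry `⟨H, cl_H⟩`. -/
def IsIndep (H : QMObj.{u} L) (B : Set H.carrier) : Prop :=
  ∀ x ∈ B, x ∉ H.cl (B \ {x})

/-- `B` is a basis of the pregeometry `⟨H, cl_H⟩`: a maximal independent subset. -/
def IsBasis (H : QMObj.{u} L) (B : Set H.carrier) : Prop :=
  IsIndep H B ∧ ∀ B' : Set H.carrier, B ⊆ B' → IsIndep H B' → B' = B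

/-- The model-theoretic algebraic closure of `X` in `M`: the set of elements
satisfying some first-order formula with parameters in `X` having finitely many
solutions. -/
def aclS (L : FirstOrder.Language.{v, w}) (M : Type u) [L.Structure M] (X : Set M) :
    Set M :=
  {y | ∃ (n : ℕ) (φ : L.BoundedFormula (Fin n) 1) (v : Fin n → M),
    (∀ i, v i ∈ X) ∧ φ.Realize v ![y] ∧ {z : M | φ.Realize v ![z]}.Finite}


/-!
Isomorphisms between countable closed subsets of uncountable members of the class have the
back-and-forth property: a point inside the closure is reached by homogeneity (ii), and one
outside it can be matched with any point outside the countable closure on the other side, by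
homogeneity (i). Such isomorphisms therefore preserve all `L_{ω₁,ω}`-formulas.

A formula `φ` mentions only a countable set `X₀ ⊆ X` of parameters, and by the above all points
outside `cl X₀` agree on `φ`. As there are uncountably many of them, if `φ` has only countably
many solutions then these all lie in `cl X₀`.

Conversely, let `y ∈ cl F` with `F ⊆ X` finite, and `z ∉ cl F`. Partial embeddings preserve closure,
so `id_F ∪ {(y, z)}` is not one, and some quantifier-free formula over `F` holds of `y` and fails
at `z`. All points outside `cl F` agree on it, so its solutions lie in the countable set `cl F`.
-/

section PartialMaps

variable {M N : Type*}

theorem pdom_preimage_swap (p : Set (M × N)) : pdom (Prod.swap ⁻¹' p) = pimg p := by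
  ext x
  simp [pdom, pimg]

theorem pimg_preimage_swap (p : Set (M × N)) : pimg (Prod.swap ⁻¹' p) = pdom p := by
  ext x
  simp [pdom, pimg]

/-- The identity map on `X`, as the graph of a partial map. -/
def idOn (X : Set M) : Set (M × M) := (fun x => (x, x)) '' X

theorem mem_idOn {X : Set M} {a b : M} : (a, b) ∈ idOn X ↔ a ∈ X ∧ a = b := by
  simp only [idOn, mem_image, Prod.mk.injEq]
  grind

theorem pdom_idOn (X : Set M) : pdom (idOn X) = X := by
  simp [pdom, idOn, image_image]

theorem pimg_idOn (X : Set M) : pimg (idOn X) = X := by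
  simp [pimg, idOn, image_image]

theorem exists_eq_sumElim_comp {ι : Type*} {X : Set M} {y z : M} {a b : ι → M}
    (hab : ∀ i, (a i, b i) ∈ insert (y, z) (idOn X)) :
    ∃ t : ι → ↥X ⊕ Fin 1, a = Sum.elim Subtype.val (fun _ => y) ∘ t ∧
      b = Sum.elim Subtype.val (fun _ => z) ∘ t := by
  have hpointwise : ∀ i, ∃ s : ↥X ⊕ Fin 1, a i = Sum.elim Subtype.val (fun _ => y) s ∧
      b i = Sum.elim Subtype.val (fun _ => z) s := by
    intro i
    rcases hab i with hyz | hX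
    · exact ⟨Sum.inr 0, Prod.mk.inj hyz⟩
    · obtain ⟨ha, hb⟩ := mem_idOn.1 hX
      exact ⟨Sum.inl ⟨a i, ha⟩, rfl, hb.symm⟩
  choose t hta htb using hpointwise
  exact ⟨t, funext hta, funext htb⟩

theorem exists_notMem_of_countable [Uncountable M] {S : Set M} (hS : S.Countable) :
    ∃ x, x ∉ S :=
  (ne_univ_iff_exists_notMem S).1 fun h => not_countable_univ (h ▸ hS)

end PartialMaps

namespace InfFormula

/-- The variables of the index type `α` that occur in an `L_{ω₁,ω}`-formula; these are the ones
not bound by its quantifiers. -/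
def freeVars {α : Type*} : ∀ {n : ℕ}, InfFormula L α n → Set α
  | _, .falsum => ∅
  | _, .equal t₁ t₂ => open scoped Classical in
      {a | Sum.inl a ∈ t₁.varFinset ∨ Sum.inl a ∈ t₂.varFinset}
  | _, .rel _ ts => open scoped Classical in {a | ∃ i, Sum.inl a ∈ (ts i).varFinset}
  | _, .not φ => φ.freeVars
  | _, .iInf φ => ⋃ i, (φ i).freeVars
  | _, .all φ => φ.freeVars

theorem countable_freeVars {α : Type*} {n : ℕ} (φ : InfFormula L α n) :
    φ.freeVars.Countable := by
  classical
  have countable_vars {m : ℕ} (t : L.Term (α ⊕ Fin m)) :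
      {a | Sum.inl a ∈ t.varFinset}.Countable :=
    t.varFinset.countable_toSet.preimage Sum.inl_injective
  induction φ with
  | falsum => exact countable_empty
  | equal t₁ t₂ => convert (countable_vars t₁).union (countable_vars t₂); ext; simp [freeVars]
  | rel R ts => convert countable_iUnion fun i => countable_vars (ts i); ext; simp [freeVars]
  | not _ ih => exact ih
  | iInf _ ih => exact countable_iUnion ih
  | all _ ih => exact ih

/-- A first-order formula, seen as an `L_{ω₁,ω}`-formula. The finite conjunction needed for an
implication is padded to a countable one by repeating its second member. -/
def ofBoundedFormula {α : Type*} : ∀ {n : ℕ}, L.BoundedFormula α n → InfFormula L α n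
  | _, .falsum => .falsum
  | _, .equal t₁ t₂ => .equal t₁ t₂
  | _, .rel R ts => .rel R ts
  | _, .imp φ ψ => .not (.iInf fun
      | 0 => ofBoundedFormula φ
      | _ + 1 => .not (ofBoundedFormula ψ))
  | _, .all φ => .all (ofBoundedFormula φ)

theorem realize_ofBoundedFormula {M : Type*} [L.Structure M] {α : Type*} {n : ℕ}
    (φ : L.BoundedFormula α n) (v : α → M) (xs : Fin n → M) :
    (ofBoundedFormula φ).Realize v xs ↔ φ.Realize v xs := by
  induction φ with
  | falsum => rfl
  | equal t₁ t₂ => rfl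
  | rel R ts => rfl
  | imp φ ψ ihφ ihψ =>
    rw [BoundedFormula.realize_imp, ← ihφ, ← ihψ]
    simp only [ofBoundedFormula, Realize]
    rw [← Nat.and_forall_add_one]
    simp only [Realize, forall_const, not_and, not_not]
  | all φ ih => exact forall_congr' fun x => ih (Fin.snoc xs x)

theorem realizeP_ofBoundedFormula {M : Type*} [L.Structure M] {A : Set M} {m : ℕ}
    (φ : L.Formula (↥A ⊕ Fin m)) (v : Fin m → M) :
    (ofBoundedFormula φ).RealizeP v ↔ φ.Realize (Sum.elim Subtype.val v) := by
  rw [RealizeP, realize_ofBoundedFormula, Formula.Realize, Subsingleton.elim default]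

end InfFormula

namespace IsPartialEmbedding

variable {M N : Type u} [L.Structure M] [L.Structure N] {p q : Set (M × N)} {β : Type*}

theorem mono (hq : IsPartialEmbedding (L := L) q) (h : p ⊆ q) : IsPartialEmbedding (L := L) p :=
  fun n φ hφ a b hab => hq n φ hφ a b fun i => h (hab i)

theorem preimage_swap (hp : IsPartialEmbedding (L := L) p) :
    IsPartialEmbedding (L := L) (Prod.swap ⁻¹' p) :=
  fun n φ hφ a b hab => (hp n φ hφ b a hab).symm

theorem realize_iff [Finite β] (hp : IsPartialEmbedding (L := L) p)
    {φ : L.Formula β} (hφ : BoundedFormula.IsQF φ) {v : β → M} {v' : β → N}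
    (hv : ∀ b, (v b, v' b) ∈ p) : φ.Realize v ↔ φ.Realize v' := by
  obtain ⟨n, ⟨e⟩⟩ := Finite.exists_equiv_fin β
  have h := hp n (φ.relabel e) (hφ.relabel _) (v ∘ e.symm) (v' ∘ e.symm) fun i => hv _
  simpa [Formula.realize_relabel, Function.comp_assoc] using h

theorem relMap_iff [DecidableEq β] (hp : IsPartialEmbedding (L := L) p) {l : ℕ}
    (R : L.Relations l) (ts : Fin l → L.Term β) {v : β → M} {v' : β → N}
    (hv : ∀ i, ∀ b ∈ (ts i).varFinset, (v b, v' b) ∈ p) :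
    Structure.RelMap R (fun i => (ts i).realize v) ↔
      Structure.RelMap R (fun i => (ts i).realize v') := by
  let s : Set β := ⋃ i, ↑(ts i).varFinset
  have hs i : ↑(ts i).varFinset ⊆ s := subset_iUnion (fun i => ((ts i).varFinset : Set β)) i
  have hvs (b : s) : (v b, v' b) ∈ p :=
    let ⟨i, hi⟩ := mem_iUnion.1 b.2
    hv i b hi
  have : Finite s := Finite.Set.finite_iUnion _
  have h := hp.realize_iff (φ := R.formula fun i => (ts i).restrictVar (inclusion (hs i)))
    (BoundedFormula.IsAtomic.rel _ _).isQF hvs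
  simpa only [Formula.realize_rel, ← Function.comp_def _ Subtype.val,
    Term.realize_restrictVar' (hs _)] using h

theorem realize_eq_realize_iff [DecidableEq β] (hp : IsPartialEmbedding (L := L) p)
    (t₁ t₂ : L.Term β) {v : β → M} {v' : β → N}
    (hv : ∀ b ∈ t₁.varFinset ∪ t₂.varFinset, (v b, v' b) ∈ p) :
    t₁.realize v = t₂.realize v ↔ t₁.realize v' = t₂.realize v' := by
  let s : Set β := ↑(t₁.varFinset ∪ t₂.varFinset)
  have hs₁ : ↑t₁.varFinset ⊆ s := Finset.coe_subset.2 Finset.subset_union_left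
  have hs₂ : ↑t₂.varFinset ⊆ s := Finset.coe_subset.2 Finset.subset_union_right
  have h := hp.realize_iff
    (φ := (t₁.restrictVar (inclusion hs₁)).equal (t₂.restrictVar (inclusion hs₂)))
    (BoundedFormula.IsAtomic.equal _ _).isQF fun b : s => hv b b.2
  simpa only [Formula.realize_equal, ← Function.comp_def _ Subtype.val,
    Term.realize_restrictVar'] using h

theorem eq_of_mem (hp : IsPartialEmbedding (L := L) p) {x : M} {y y' : N} (hy : (x, y) ∈ p)
    (hy' : (x, y') ∈ p) : y = y' := by
  have h := hp.realize_eq_realize_iff (.var (0 : Fin 2)) (.var 1) (v := ![x, x]) (v' := ![y, y'])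
    fun b _ => by fin_cases b <;> assumption
  exact h.1 rfl

theorem pimage_pdom (hp : IsPartialEmbedding (L := L) p) (hqp : q ⊆ p) :
    pimage p (pdom q) = pimg q := by
  ext y
  constructor
  · rintro ⟨_, ⟨⟨x, y'⟩, hq, rfl⟩, hp'⟩
    exact ⟨(x, y'), hq, hp.eq_of_mem (hqp hq) hp'⟩
  · rintro ⟨⟨x, y⟩, hq, rfl⟩
    exact ⟨x, ⟨(x, y), hq, rfl⟩, hqp hq⟩

theorem sUnion {S : Set (Set (M × N))} (hne : S.Nonempty) (hdir : DirectedOn (· ⊆ ·) S)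
    (hS : ∀ p ∈ S, IsPartialEmbedding (L := L) p) : IsPartialEmbedding (L := L) (⋃₀ S) := by
  intro n φ hφ a b hab
  obtain ⟨p, hpS, hp⟩ := hdir.exists_mem_subset_of_finite_of_subset_sUnion hne
    (finite_range fun i => (a i, b i)) (range_subset_iff.2 hab)
  exact hS p hpS n φ hφ a b (range_subset_iff.1 hp)

end IsPartialEmbedding

theorem isPartialEmbedding_idOn {M : Type u} [L.Structure M] (X : Set M) :
    IsPartialEmbedding (L := L) (idOn X) := by
  intro n φ _ a b hab
  rw [show a = b from funext fun i => (mem_idOn.1 (hab i)).2]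

theorem exists_realize_and_not_realize_of_not_isPartialEmbedding
    {M N : Type u} [L.Structure M] [L.Structure N] {p : Set (M × N)}
    (hp : ¬ IsPartialEmbedding (L := L) p) :
    ∃ (n : ℕ) (φ : L.Formula (Fin n)) (a : Fin n → M) (b : Fin n → N),
      BoundedFormula.IsQF φ ∧ (∀ i, (a i, b i) ∈ p) ∧ φ.Realize a ∧ ¬ φ.Realize b := by
  simp only [IsPartialEmbedding, not_forall] at hp
  obtain ⟨n, φ, hφ, a, b, hab, hiff⟩ := hp
  by_cases ha : φ.Realize a
  · exact ⟨n, φ, a, b, hφ, hab, ha, fun hb => hiff (iff_of_true ha hb)⟩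
  · have hb : φ.Realize b := by_contra fun hb => hiff (iff_of_false ha hb)
    exact ⟨n, φ.not, a, b, hφ.not, hab, ha, fun hnot => hnot hb⟩

/-- An isomorphism between countable closed (or empty) subsets of `H` and `H'`, as the graph of a
partial map: the maps `g` over which the homogeneity axioms apply. -/
structure IsClosedIso (H H' : QMObj.{u} L) (g : Set (H.carrier × H'.carrier)) : Prop where
  isPartialEmbedding : IsPartialEmbedding (L := L) g
  ccoe_pdom : CCOE H (pdom g)
  ccoe_pimg : CCOE H' (pimg g)

theorem CCOE.countable {H : QMObj.{u} L} {G : Set H.carrier} (hG : CCOE H G) : G.Countable :=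
  hG.elim And.left fun h => h ▸ countable_empty

theorem IsClosedIso.preimage_swap {H H' : QMObj.{u} L} {g : Set (H.carrier × H'.carrier)}
    (hg : IsClosedIso H H' g) : IsClosedIso H' H (Prod.swap ⁻¹' g) where
  isPartialEmbedding := hg.isPartialEmbedding.preimage_swap
  ccoe_pdom := by rw [pdom_preimage_swap]; exact hg.ccoe_pimg
  ccoe_pimg := by rw [pimg_preimage_swap]; exact hg.ccoe_pdom

/-- The partial embeddings `h ⊇ p` that add only finitely many pairs to `g` and whose domain stays
inside the closure of the domain of `p`: the finite approximations of the back-and-forth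
construction of a closed isomorphism extending `p`. -/
def finiteExtensions (H H' : QMObj.{u} L) (g p : Set (H.carrier × H'.carrier)) :
    Set (Set (H.carrier × H'.carrier)) :=
  {h | p ⊆ h ∧ (h \ g).Finite ∧ IsPartialEmbedding (L := L) h ∧ pdom h ⊆ H.cl (pdom p)}

theorem insert_mem_finiteExtensions {H H' : QMObj.{u} L} {g p h : Set (H.carrier × H'.carrier)}
    (hh : h ∈ finiteExtensions H H' g p) {y : H.carrier} {y' : H'.carrier}
    (hins : IsPartialEmbedding (L := L) (insert (y, y') h)) (hy : y ∈ H.cl (pdom p)) :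
    insert (y, y') h ∈ finiteExtensions H H' g p := by
  obtain ⟨hph, hfin, -, hdom⟩ := hh
  refine ⟨hph.trans (subset_insert _ _), (hfin.insert (y, y')).subset ?_, hins, ?_⟩
  · exact insert_sdiff_subset
  · rw [pdom, image_insert_eq]
    exact insert_subset hy hdom

namespace IsQMClass

variable {C : Set (QMObj.{u} L)} {H H' : QMObj.{u} L}

theorem countable_cl (hC : IsQMClass C) (hH : H ∈ C) {X : Set H.carrier} (hX : X.Countable) :
    (H.cl X).Countable := by
  refine ((countable_ofPred_finite_subset hX).biUnion (t := fun F _ => H.cl F)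
    fun F hF => hC.cl_finite_countable H hH F hF.1).mono fun y hy => ?_
  obtain ⟨F, hF, hyF⟩ := (hC.pregeom H hH).finChar X y hy
  exact mem_biUnion (x := (F : Set H.carrier)) ⟨F.finite_toSet, hF⟩ hyF

theorem ccoe_cl (hC : IsQMClass C) (hH : H ∈ C) {X : Set H.carrier} (hX : X.Countable) :
    CCOE H (H.cl X) :=
  Or.inl ⟨hC.countable_cl hH hX, (hC.pregeom H hH).idem X⟩

theorem isClosedIso_idOn_cl (hC : IsQMClass C) (hH : H ∈ C) {X : Set H.carrier}
    (hX : X.Countable) : IsClosedIso H H (idOn (H.cl X)) where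
  isPartialEmbedding := isPartialEmbedding_idOn _
  ccoe_pdom := by rw [pdom_idOn]; exact hC.ccoe_cl hH hX
  ccoe_pimg := by rw [pimg_idOn]; exact hC.ccoe_cl hH hX

theorem mem_cl_pdom_iff (hC : IsQMClass C) (hH : H ∈ C) (hH' : H' ∈ C)
    {p q : Set (H.carrier × H'.carrier)} (hp : IsPartialEmbedding (L := L) p) (hqp : q ⊆ p)
    {y : H.carrier} {y' : H'.carrier} (hy : (y, y') ∈ p) :
    y ∈ H.cl (pdom q) ↔ y' ∈ H'.cl (pimg q) := by
  rw [← hp.pimage_pdom hqp]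
  exact hC.cl_embedding H hH H' hH' p hp _ (image_mono hqp) y y' hy

theorem isPartialEmbedding_insert (hC : IsQMClass C) (hH : H ∈ C) (hH' : H' ∈ C)
    {g : Set (H.carrier × H'.carrier)} (hg : IsClosedIso H H' g) {x : H.carrier}
    {x' : H'.carrier} (hx : x ∉ H.cl (pdom g)) (hx' : x' ∉ H'.cl (pimg g)) :
    IsPartialEmbedding (L := L) (insert (x, x') g) := by
  rw [← union_singleton]
  exact hC.homogeneity₁ H hH H' hH' g hg.ccoe_pdom hg.ccoe_pimg hg.isPartialEmbedding x x' hx hx'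

theorem isPartialEmbedding_insert_idOn_cl (hC : IsQMClass C) (hH : H ∈ C) {X : Set H.carrier}
    (hX : X.Countable) {y z : H.carrier} (hy : y ∉ H.cl X) (hz : z ∉ H.cl X) :
    IsPartialEmbedding (L := L) (insert (y, z) (idOn (H.cl X))) := by
  refine hC.isPartialEmbedding_insert hH hH (hC.isClosedIso_idOn_cl hH hX) ?_ ?_
  · rwa [pdom_idOn, (hC.pregeom H hH).idem]
  · rwa [pimg_idOn, (hC.pregeom H hH).idem]

theorem exists_isPartialEmbedding_insert (hC : IsQMClass C) (hH : H ∈ C) (hH' : H' ∈ C)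
    {g p : Set (H.carrier × H'.carrier)} (hg : IsClosedIso H H' g) (hgp : g ⊆ p)
    (hfin : (p \ g).Finite) (hp : IsPartialEmbedding (L := L) p) {y : H.carrier}
    (hy : y ∈ H.cl (pdom p)) : ∃ y', IsPartialEmbedding (L := L) (insert (y, y') p) := by
  have hdom : pdom p = pdom (p \ g) ∪ pdom g := by
    rw [pdom, pdom, pdom, ← image_union, sdiff_union_of_subset hgp]
  rw [← union_sdiff_cancel hgp] at hp
  obtain ⟨y', hy'⟩ := hC.homogeneity₂ H hH H' hH' g (p \ g) hg.ccoe_pdom hg.ccoe_pimg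
    hg.isPartialEmbedding (hfin.image _) hp y (hdom ▸ hy)
  rw [union_sdiff_cancel hgp, union_singleton] at hy'
  exact ⟨y', hy'⟩

theorem exists_isPartialEmbedding_insert_right (hC : IsQMClass C) (hH : H ∈ C) (hH' : H' ∈ C)
    {g p : Set (H.carrier × H'.carrier)} (hg : IsClosedIso H H' g) (hgp : g ⊆ p)
    (hfin : (p \ g).Finite) (hp : IsPartialEmbedding (L := L) p) {y' : H'.carrier}
    (hy' : y' ∈ H'.cl (pimg p)) : ∃ y, IsPartialEmbedding (L := L) (insert (y, y') p) := by
  have hfin_swap : (Prod.swap ⁻¹' (p \ g)).Finite := hfin.preimage Prod.swap_injective.injOn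
  obtain ⟨y, hy⟩ := hC.exists_isPartialEmbedding_insert hH' hH hg.preimage_swap
    (preimage_mono hgp) hfin_swap hp.preimage_swap (y := y') (by rwa [pdom_preimage_swap])
  refine ⟨y, hy.preimage_swap.mono ?_⟩
  rintro ⟨a, b⟩ (hab | hab)
  · exact Or.inl (congrArg Prod.swap hab)
  · exact Or.inr hab

theorem exists_mem_finiteExtensions_mem_pdom (hC : IsQMClass C) (hH : H ∈ C) (hH' : H' ∈ C)
    {g p h : Set (H.carrier × H'.carrier)} (hg : IsClosedIso H H' g) (hgp : g ⊆ p)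
    (hh : h ∈ finiteExtensions H H' g p) {y : H.carrier} (hy : y ∈ H.cl (pdom p)) :
    ∃ k ∈ finiteExtensions H H' g p, h ⊆ k ∧ y ∈ pdom k := by
  have hy_h : y ∈ H.cl (pdom h) := (hC.pregeom H hH).mono (image_mono hh.1) hy
  obtain ⟨y', hins⟩ :=
    hC.exists_isPartialEmbedding_insert hH hH' hg (hgp.trans hh.1) hh.2.1 hh.2.2.1 hy_h
  exact ⟨_, insert_mem_finiteExtensions hh hins hy, subset_insert _ _,
    mem_image_of_mem _ (mem_insert _ _)⟩

theorem exists_mem_finiteExtensions_mem_pimg (hC : IsQMClass C) (hH : H ∈ C) (hH' : H' ∈ C)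
    {g p h : Set (H.carrier × H'.carrier)} (hg : IsClosedIso H H' g) (hgp : g ⊆ p)
    (hh : h ∈ finiteExtensions H H' g p) {y' : H'.carrier} (hy' : y' ∈ H'.cl (pimg p)) :
    ∃ k ∈ finiteExtensions H H' g p, h ⊆ k ∧ y' ∈ pimg k := by
  have hy'_h : y' ∈ H'.cl (pimg h) := (hC.pregeom H' hH').mono (image_mono hh.1) hy'
  obtain ⟨y, hins⟩ :=
    hC.exists_isPartialEmbedding_insert_right hH hH' hg (hgp.trans hh.1) hh.2.1 hh.2.2.1 hy'_h
  have hy : y ∈ H.cl (pdom p) :=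
    (hC.mem_cl_pdom_iff hH hH' hins (hh.1.trans (subset_insert _ _)) (mem_insert _ _)).2 hy'
  exact ⟨_, insert_mem_finiteExtensions hh hins hy, subset_insert _ _,
    mem_image_of_mem _ (mem_insert _ _)⟩

theorem exists_directedOn_finiteExtensions (hC : IsQMClass C) (hH : H ∈ C) (hH' : H' ∈ C)
    {g p : Set (H.carrier × H'.carrier)} (hg : IsClosedIso H H' g) (hgp : g ⊆ p)
    (hp : p ∈ finiteExtensions H H' g p) (hdom : (H.cl (pdom p)).Countable)
    (himg : (H'.cl (pimg p)).Countable) :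
    ∃ S ⊆ finiteExtensions H H' g p, p ∈ S ∧ DirectedOn (· ⊆ ·) S ∧
      H.cl (pdom p) ⊆ pdom (⋃₀ S) ∧ H'.cl (pimg p) ⊆ pimg (⋃₀ S) := by
  have := hdom.to_subtype
  have := himg.to_subtype
  let := Encodable.ofCountable (H.cl (pdom p) ⊕ H'.cl (pimg p))
  let 𝒟 : H.cl (pdom p) ⊕ H'.cl (pimg p) → Order.Cofinal (finiteExtensions H H' g p)
    | .inl y => ⟨{h | y.1 ∈ pdom h.1}, fun h =>
        let ⟨k, hk, hhk, hyk⟩ := hC.exists_mem_finiteExtensions_mem_pdom hH hH' hg hgp h.2 y.2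
        ⟨⟨k, hk⟩, hyk, hhk⟩⟩
    | .inr y => ⟨{h | y.1 ∈ pimg h.1}, fun h =>
        let ⟨k, hk, hhk, hyk⟩ := hC.exists_mem_finiteExtensions_mem_pimg hH hH' hg hgp h.2 y.2
        ⟨⟨k, hk⟩, hyk, hhk⟩⟩
  let I := Order.idealOfCofinals ⟨p, hp⟩ 𝒟
  have hsub {h : finiteExtensions H H' g p} (hh : h ∈ I) : h.1 ⊆ ⋃₀ (Subtype.val '' (I : Set _)) :=
    subset_sUnion_of_mem (mem_image_of_mem _ hh)
  refine ⟨Subtype.val '' (I : Set _), Subtype.coe_image_subset _ _,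
    ⟨_, Order.mem_idealOfCofinals ⟨p, hp⟩ 𝒟, rfl⟩, ?_, fun y hy => ?_, fun y hy => ?_⟩
  · exact directedOn_image.2 I.directed
  · obtain ⟨h, hyh, hhI⟩ := Order.cofinal_meets_idealOfCofinals ⟨p, hp⟩ 𝒟 (.inl ⟨y, hy⟩)
    exact image_mono (hsub hhI) hyh
  · obtain ⟨h, hyh, hhI⟩ := Order.cofinal_meets_idealOfCofinals ⟨p, hp⟩ 𝒟 (.inr ⟨y, hy⟩)
    exact image_mono (hsub hhI) hyh

theorem exists_isClosedIso_of_finite_sdiff (hC : IsQMClass C) (hH : H ∈ C) (hH' : H' ∈ C)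
    {g p : Set (H.carrier × H'.carrier)} (hg : IsClosedIso H H' g) (hgp : g ⊆ p)
    (hfin : (p \ g).Finite) (hp : IsPartialEmbedding (L := L) p) :
    ∃ q, p ⊆ q ∧ IsClosedIso H H' q ∧ pdom q = H.cl (pdom p) := by
  have hdom_countable : (pdom p).Countable := by
    rw [← union_sdiff_cancel hgp, pdom, image_union]
    exact hg.ccoe_pdom.countable.union (hfin.image _).countable
  have himg_countable : (pimg p).Countable := by
    rw [← union_sdiff_cancel hgp, pimg, image_union]
    exact hg.ccoe_pimg.countable.union (hfin.image _).countable
  obtain ⟨S, hS, hpS, hdir, hdom, himg⟩ := hC.exists_directedOn_finiteExtensions hH hH' hg hgp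
    ⟨subset_rfl, hfin, hp, (hC.pregeom H hH).subset_cl _⟩
    (hC.countable_cl hH hdom_countable) (hC.countable_cl hH' himg_countable)
  have hpq : p ⊆ ⋃₀ S := subset_sUnion_of_mem hpS
  have hq : IsPartialEmbedding (L := L) (⋃₀ S) := .sUnion ⟨p, hpS⟩ hdir fun h hh => (hS hh).2.2.1
  have hdom_eq : pdom (⋃₀ S) = H.cl (pdom p) := by
    refine Subset.antisymm ?_ hdom
    rintro _ ⟨x, ⟨h, hh, hx⟩, rfl⟩
    exact (hS hh).2.2.2 ⟨x, hx, rfl⟩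
  have himg_eq : pimg (⋃₀ S) = H'.cl (pimg p) := by
    refine Subset.antisymm ?_ himg
    rintro _ ⟨x, hx, rfl⟩
    exact (hC.mem_cl_pdom_iff hH hH' hq hpq hx).1 (hdom_eq ▸ mem_image_of_mem _ hx)
  refine ⟨⋃₀ S, hpq, ⟨hq, ?_, ?_⟩, hdom_eq⟩
  · exact hdom_eq ▸ hC.ccoe_cl hH hdom_countable
  · exact himg_eq ▸ hC.ccoe_cl hH' himg_countable

theorem exists_isClosedIso_of_insert (hC : IsQMClass C) (hH : H ∈ C) (hH' : H' ∈ C)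
    {q : Set (H.carrier × H'.carrier)} (hq : IsClosedIso H H' q) {x : H.carrier} {x' : H'.carrier}
    (hins : IsPartialEmbedding (L := L) (insert (x, x') q)) :
    ∃ q', insert (x, x') q ⊆ q' ∧ IsClosedIso H H' q' := by
  have hfin : (insert (x, x') q \ q).Finite :=
    (finite_singleton (x, x')).subset (sdiff_subset_iff.2 union_singleton.ge)
  obtain ⟨q', hqq', hq', -⟩ :=
    hC.exists_isClosedIso_of_finite_sdiff hH hH' hq (subset_insert _ _) hfin hins
  exact ⟨q', hqq', hq'⟩

theorem exists_isClosedIso_mem (hC : IsQMClass C) (hH : H ∈ C) (hH' : H' ∈ C)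
    [Uncountable H'.carrier] {q : Set (H.carrier × H'.carrier)} (hq : IsClosedIso H H' q)
    (x : H.carrier) : ∃ x' q', q ⊆ q' ∧ IsClosedIso H H' q' ∧ (x, x') ∈ q' := by
  by_cases hx : x ∈ H.cl (pdom q)
  · obtain ⟨q', hqq', hq', hdom⟩ := hC.exists_isClosedIso_of_finite_sdiff hH hH' hq subset_rfl
      (by simp) hq.isPartialEmbedding
    obtain ⟨⟨_, x'⟩, hxx', rfl⟩ := hdom ▸ hx
    exact ⟨x', q', hqq', hq', hxx'⟩
  · obtain ⟨x', hx'⟩ := exists_notMem_of_countable (hC.countable_cl hH' hq.ccoe_pimg.countable)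
    obtain ⟨q', hqq', hq'⟩ := hC.exists_isClosedIso_of_insert hH hH' hq
      (hC.isPartialEmbedding_insert hH hH' hq hx hx')
    exact ⟨x', q', (subset_insert _ _).trans hqq', hq', hqq' (mem_insert _ _)⟩

theorem exists_isClosedIso_mem_right (hC : IsQMClass C) (hH : H ∈ C) (hH' : H' ∈ C)
    [Uncountable H.carrier] {q : Set (H.carrier × H'.carrier)} (hq : IsClosedIso H H' q)
    (x' : H'.carrier) : ∃ x q', q ⊆ q' ∧ IsClosedIso H H' q' ∧ (x, x') ∈ q' := by
  obtain ⟨x, q', hqq', hq', hxx'⟩ := hC.exists_isClosedIso_mem hH' hH hq.preimage_swap x'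
  exact ⟨x, Prod.swap ⁻¹' q', fun a ha => hqq' ha, hq'.preimage_swap, hxx'⟩

theorem realize_iff_of_isClosedIso (hC : IsQMClass C) (hH : H ∈ C) (hH' : H' ∈ C)
    [Uncountable H.carrier] [Uncountable H'.carrier] {α : Type*} {n : ℕ} (φ : InfFormula L α n)
    {q : Set (H.carrier × H'.carrier)} (hq : IsClosedIso H H' q) {v : α → H.carrier}
    {v' : α → H'.carrier} {xs : Fin n → H.carrier} {xs' : Fin n → H'.carrier}
    (hv : ∀ a ∈ φ.freeVars, (v a, v' a) ∈ q) (hxs : ∀ i, (xs i, xs' i) ∈ q) :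
    φ.Realize v xs ↔ φ.Realize v' xs' := by
  classical
  induction φ generalizing q with
  | falsum => rfl
  | equal t₁ t₂ =>
    refine hq.isPartialEmbedding.realize_eq_realize_iff t₁ t₂ ?_
    rintro (a | i) hmem
    · exact hv a (Finset.mem_union.1 hmem)
    · exact hxs i
  | rel R ts =>
    refine hq.isPartialEmbedding.relMap_iff R ts fun i => ?_
    rintro (a | j) hmem
    · exact hv a ⟨i, hmem⟩
    · exact hxs j
  | not φ ih => exact not_congr (ih hq hv hxs)
  | iInf φ ih =>
    exact forall_congr' fun i => ih i hq (fun a ha => hv a (mem_iUnion_of_mem i ha)) hxs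
  | all φ ih =>
    have ih_snoc {x x' q'} (hqq' : q ⊆ q') (hq' : IsClosedIso H H' q') (hx : (x, x') ∈ q') :
        φ.Realize v (Fin.snoc xs x) ↔ φ.Realize v' (Fin.snoc xs' x') := by
      refine ih hq' (fun a ha => hqq' (hv a ha)) fun i => ?_
      refine Fin.lastCases ?_ (fun i => ?_) i
      · simpa only [Fin.snoc_last] using hx
      · simpa only [Fin.snoc_castSucc] using hqq' (hxs i)
    constructor
    · intro h x'
      obtain ⟨x, q', hqq', hq', hx⟩ := hC.exists_isClosedIso_mem_right hH hH' hq x'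
      exact (ih_snoc hqq' hq' hx).1 (h x)
    · intro h x
      obtain ⟨x', q', hqq', hq', hx⟩ := hC.exists_isClosedIso_mem hH hH' hq x
      exact (ih_snoc hqq' hq' hx).2 (h x')

theorem realizeP_iff_of_notMem_cl (hC : IsQMClass C) (hH : H ∈ C) [Uncountable H.carrier]
    {A X : Set H.carrier} (hX : X.Countable) {φ : InfFormula L (↥A ⊕ Fin 1) 0}
    (hφ : ∀ a : A, Sum.inl a ∈ φ.freeVars → (a : H.carrier) ∈ X) {y z : H.carrier}
    (hy : y ∉ H.cl X) (hz : z ∉ H.cl X) :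
    φ.RealizeP (fun _ => y) ↔ φ.RealizeP (fun _ => z) := by
  obtain ⟨q, hsub, hq⟩ := hC.exists_isClosedIso_of_insert hH hH
    (hC.isClosedIso_idOn_cl hH hX) (hC.isPartialEmbedding_insert_idOn_cl hH hX hy hz)
  refine hC.realize_iff_of_isClosedIso hH hH φ hq ?_ fun i => i.elim0
  rintro (a | _) ha
  · exact hsub (Or.inr (mem_idOn.2 ⟨(hC.pregeom H hH).subset_cl X (hφ a ha), rfl⟩))
  · exact hsub (Or.inl rfl)

theorem mem_cl_of_countable_setOf_realizeP (hC : IsQMClass C) (hH : H ∈ C)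
    [Uncountable H.carrier] {X : Set H.carrier} {φ : InfFormula L (↥X ⊕ Fin 1) 0}
    (hφ : {a : H.carrier | φ.RealizeP fun _ => a}.Countable) {y : H.carrier}
    (hy : φ.RealizeP fun _ => y) : y ∈ H.cl X := by
  let X₀ : Set H.carrier := Subtype.val '' (Sum.inl ⁻¹' φ.freeVars : Set X)
  have hX₀ : X₀.Countable := (φ.countable_freeVars.preimage Sum.inl_injective).image _
  obtain ⟨z, hz⟩ := exists_notMem_of_countable ((hC.countable_cl hH hX₀).union hφ)
  rw [mem_union, not_or] at hz
  by_contra hyX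
  have hyX₀ : y ∉ H.cl X₀ := fun h =>
    hyX ((hC.pregeom H hH).mono (Subtype.coe_image_subset _ _) h)
  exact hz.2 ((hC.realizeP_iff_of_notMem_cl hH hX₀ (fun a ha => ⟨a, ha, rfl⟩) hyX₀ hz.1).1 hy)

theorem exists_formula_of_mem_cl (hC : IsQMClass C) (hH : H ∈ C) {X : Set H.carrier}
    (hX : X.Countable) {y : H.carrier} (hy : y ∈ H.cl X) :
    ∃ φ : L.Formula (↥X ⊕ Fin 1), φ.Realize (Sum.elim Subtype.val fun _ => y) ∧
      {a : H.carrier | φ.Realize (Sum.elim Subtype.val fun _ => a)} ⊆ H.cl X := by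
  by_cases hz : ∃ z, z ∉ H.cl X
  swap
  · exact ⟨⊤, Formula.realize_top.2 trivial, fun a _ => not_not.1 (not_exists.1 hz a)⟩
  obtain ⟨z, hz⟩ := hz
  have hnot : ¬ IsPartialEmbedding (L := L) (insert (y, z) (idOn X)) := fun hp => by
    have h := hC.mem_cl_pdom_iff hH hH hp (subset_insert _ _) (mem_insert _ _)
    rw [pdom_idOn, pimg_idOn] at h
    exact hz (h.1 hy)
  obtain ⟨n, φ, a, b, hφ, hab, ha, hb⟩ :=
    exists_realize_and_not_realize_of_not_isPartialEmbedding hnot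
  obtain ⟨t, rfl, rfl⟩ := exists_eq_sumElim_comp hab
  refine ⟨φ.relabel t, Formula.realize_relabel.2 ha, fun c hc => ?_⟩
  by_contra hcX
  refine hb (((hC.isPartialEmbedding_insert_idOn_cl hH hX hcX hz).realize_iff hφ ?_).1
    (Formula.realize_relabel.1 hc))
  intro i
  cases h : t i with
  | inl x => simp [h, mem_idOn, (hC.pregeom H hH).subset_cl X x.2]
  | inr j => simp [h]

theorem exists_realizeP_of_mem_cl (hC : IsQMClass C) (hH : H ∈ C) {X : Set H.carrier}
    {y : H.carrier} (hy : y ∈ H.cl X) :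
    ∃ φ : InfFormula L (↥X ⊕ Fin 1) 0,
      φ.RealizeP (fun _ => y) ∧ {a : H.carrier | φ.RealizeP fun _ => a}.Countable := by
  obtain ⟨F, hFX, hyF⟩ := (hC.pregeom H hH).finChar X y hy
  obtain ⟨φ, hφy, hφ⟩ := hC.exists_formula_of_mem_cl hH F.countable_toSet hyF
  have hrealize (a : H.carrier) :
      (InfFormula.ofBoundedFormula (φ.relabel (Sum.map (inclusion hFX) id))).RealizeP
        (fun _ => a) ↔ φ.Realize (Sum.elim Subtype.val fun _ => a) := by
    rw [InfFormula.realizeP_ofBoundedFormula, Formula.realize_relabel, Sum.elim_comp_map]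
    rfl
  refine ⟨_, (hrealize y).2 hφy, ?_⟩
  exact (hC.countable_cl hH F.countable_toSet).mono fun a ha => hφ ((hrealize a).1 ha)

end IsQMClass

theorem statement_6_general (C : Set (QMObj.{u} L)) (hC : IsQMClass C) (H : QMObj.{u} L)
    (hH : H ∈ C) [Uncountable H.carrier] (X : Set H.carrier) (y : H.carrier) :
    y ∈ H.cl X ↔ ∃ φ : InfFormula L (↥X ⊕ Fin 1) 0,
      φ.RealizeP (fun _ => y) ∧ {a : H.carrier | φ.RealizeP (fun _ => a)}.Countable :=
  ⟨hC.exists_realizeP_of_mem_cl hH, fun ⟨_, hy, hφ⟩ =>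
    hC.mem_cl_of_countable_setOf_realizeP hH hφ hy⟩

/-- For `H ∈ C` uncountable and `X ⊆ H` countable: `y ∈ cl(X)` iff `y`
satisfies some `L_{ω₁,ω}`-formula with parameters from `X` having countably many
solutions in `H`. -/
theorem statement_6 {L : FirstOrder.Language.{v, w}} (C : Set (QMObj.{u} L))
    (hC : IsQMClass C) (H : QMObj.{u} L) (hH : H ∈ C)
    (hunc : Uncountable H.carrier)
    (X : Set H.carrier) (hX : X.Countable) (y : H.carrier) :
    y ∈ H.cl X ↔ ∃ φ : InfFormula L (↥X ⊕ Fin 1) 0,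
      φ.RealizeP (fun _ => y) ∧ {a : H.carrier | φ.RealizeP (fun _ => a)}.Countable :=
  statement_6_general C hC H hH X y

end QM
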